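/- For every permutation w of {1,…,n} and every generic pipe dream δ ∈ GPDs(w), the degree in the variable B of the weight wt(δ) equals n² minus the number of cross, horizontal and vertical tiles of δ, and this degree is at most n² − ℓ(w), where ℓ(w) is the number of inversions of w. Equality holds if and only if δ is a classic pipe dream, i.e., every tile at a position (i,j) with i+j ≤ n is a cross or a bump, every tile at a position with i+j = n+1 is a NW-elbow, every tile at a position with i+j > n+1 is blank, and no two pipes cross each other at more than one tile. -/

import Mathlib

open scoped Classical

namespace GPDpaper

/-- Raw data of a pipe-filling of the `n × n` grid: `d.1 i j` is the (optional) pipe label on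
the vertical edge at row `i`, West of column `j` (so `d.1 i 0` is on the West boundary and
`d.1 i (Fin.last n)` on the East boundary); `d.2 i j` is the label on the horizontal edge
North of row `i` in column `j` (so `d.2 0 j` is on the North boundary and
`d.2 (Fin.last n) j` on the South boundary).  Rows are numbered from the top. -/
abbrev Pipes (n : ℕ) :=
  (Fin n → Fin (n+1) → Option (Fin n)) × (Fin (n+1) → Fin n → Option (Fin n))

variable {n : ℕ}

/-- Label on the West edge of square `(i,j)`. -/
def We (d : Pipes n) (i j : Fin n) : Option (Fin n) := d.1 i j.castSucc
/-- Label on the East edge of square `(i,j)`. -/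
def Ea (d : Pipes n) (i j : Fin n) : Option (Fin n) := d.1 i j.succ
/-- Label on the North edge of square `(i,j)`. -/
def No (d : Pipes n) (i j : Fin n) : Option (Fin n) := d.2 i.castSucc j
/-- Label on the South edge of square `(i,j)`. -/
def So (d : Pipes n) (i j : Fin n) : Option (Fin n) := d.2 i.succ j

/-- The local condition making `d` a generic pipe dream: at each square, the pair of labels
leaving through the East and North edges is either `(W,S)` (cross/horizontal/vertical/blank
tile) or `(S,W)` (bump/elbow/blank tile); moreover two edges of the same square never carry
the same pipe label. -/
def IsValid (d : Pipes n) : Prop :=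
  ∀ i j : Fin n,
    ((Ea d i j, No d i j) = (We d i j, So d i j) ∨
     (Ea d i j, No d i j) = (So d i j, We d i j)) ∧
    (We d i j = So d i j → We d i j = none)

/-- The seven generic pipe dream tiles. -/
inductive Tile where
  | cross | bump | nw | se | horiz | vert | blank
deriving DecidableEq

/-- The tile of a pipe-filling at square `(i,j)`. -/
def tile (d : Pipes n) (i j : Fin n) : Tile :=
  match We d i j, So d i j with
  | some a, some _ => if Ea d i j = some a then .cross else .bump
  | some _, none => if No d i j = none then .horiz else .nw
  | none, some _ => if No d i j = none then .se else .vert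
  | none, none => .blank

/-- `d` is a generic pipe dream for the permutation `w`: it is locally valid, the pipe
entering the West boundary in row `i` is labelled `i`, no pipes meet the East and South
boundaries, and the pipe exiting the North boundary in column `j` is labelled `w⁻¹(j)`. -/
def IsGPDof (w : Equiv.Perm (Fin n)) (d : Pipes n) : Prop :=
  IsValid d ∧
  (∀ i : Fin n, d.1 i 0 = some i) ∧
  (∀ i : Fin n, d.1 i (Fin.last n) = none) ∧
  (∀ j : Fin n, d.2 (Fin.last n) j = none) ∧
  (∀ j : Fin n, d.2 0 j = some (w.symm j))

/-- Number of tiles of `d` of a given type. -/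
noncomputable def tileCount (d : Pipes n) (t : Tile) : ℕ :=
  (Finset.univ.filter (fun p : Fin n × Fin n => tile d p.1 p.2 = t)).card

/-- The pipes labelled `p` and `q` cross at the tile `(i,j)`. -/
def CrossesAt (d : Pipes n) (p q : Fin n) (i j : Fin n) : Prop :=
  tile d i j = .cross ∧
  ((We d i j = some p ∧ So d i j = some q) ∨ (We d i j = some q ∧ So d i j = some p))

/-- The number of tiles at which the pipes labelled `p` and `q` cross. -/
noncomputable def crossCount (d : Pipes n) (p q : Fin n) : ℕ :=
  (Finset.univ.filter (fun ij : Fin n × Fin n => CrossesAt d p q ij.1 ij.2)).card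

/-- No two pipes of `d` cross each other at more than one tile. -/
def NoDoubleCross (d : Pipes n) : Prop := ∀ p q : Fin n, crossCount d p q ≤ 1

/-- Number of inversions (Coxeter length) of a permutation. -/
def invCount (w : Equiv.Perm (Fin n)) : ℕ :=
  (Finset.univ.filter (fun p : Fin n × Fin n => p.1 < p.2 ∧ w p.2 < w p.1)).card

/-- Classic pipe dream (in 1-indexed terms: crosses and bumps for `i+j ≤ n`, NW-elbows on the
antidiagonal `i+j = n+1`, blanks below, and no two pipes crossing twice). -/
def IsClassic (d : Pipes n) : Prop :=
  (∀ i j : Fin n, (i : ℕ) + (j : ℕ) + 2 ≤ n → tile d i j = .cross ∨ tile d i j = .bump) ∧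
  (∀ i j : Fin n, (i : ℕ) + (j : ℕ) + 2 = n + 1 → tile d i j = .nw) ∧
  (∀ i j : Fin n, (i : ℕ) + (j : ℕ) + 2 > n + 1 → tile d i j = .blank) ∧
  NoDoubleCross d

/-- Bumpless-reduced: no bump tiles and no two pipes crossing twice. -/
def IsBumplessReduced (d : Pipes n) : Prop :=
  (∀ i j : Fin n, tile d i j ≠ .bump) ∧ NoDoubleCross d

end GPDpaper

namespace GPDpaper

/-- Variables `x₁,…,xₙ, y₁,…,yₙ, A, B`. -/
inductive Var (n : ℕ) where
  | x (i : Fin n) | y (j : Fin n) | A | B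

variable {n : ℕ}

/-- The weight of a generic pipe dream, in `ℤ[x₁,…,xₙ,y₁,…,yₙ,A,B]`. -/
noncomputable def wt (d : Pipes n) : MvPolynomial (Var n) ℤ :=
  ∏ i : Fin n, ∏ j : Fin n,
    match tile d i j with
    | .cross | .horiz | .vert =>
        MvPolynomial.X Var.A + MvPolynomial.X (Var.x i) - MvPolynomial.X (Var.y j)
    | .blank =>
        MvPolynomial.X Var.B - MvPolynomial.X (Var.x i) + MvPolynomial.X (Var.y j)
    | _ => MvPolynomial.X Var.A + MvPolynomial.X Var.B

/-- The generic pipe dream polynomial `G_w`. -/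
noncomputable def G (w : Equiv.Perm (Fin n)) : MvPolynomial (Var n) ℤ :=
  ∑ d ∈ Finset.univ.filter (fun d : Pipes n => IsGPDof w d), wt d

/-!
Sweep the grid tile by tile, from the bottom row up and from left to right in each row. The swept
region is bounded by a lattice path, the *frontier*, and the labels read along it form a word.
Sweeping a tile either leaves the word unchanged or exchanges two adjacent letters, and two pipes
trade places exactly at the tiles where they cross. The word starts as `1, …, n` and ends as
`w⁻¹(1), …, w⁻¹(n)`, so `p` and `q` cross an odd number of times if and only if `w` inverts them.
Hence `ℓ(w)` is at most the number of crosses, with equality exactly when no two pipes cross twice.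

Every tile contributes `1` to the degree in `B`, except crosses, horizontals and verticals. Equality
in the degree bound therefore also rules out horizontal and vertical tiles, and in their absence
every tile sends an occupied South edge to an occupied East edge and an occupied West edge to an
occupied North edge. So occupancy is constant along antidiagonals, where the West boundary (full)
and the South boundary (empty) determine it.
-/

open Finset

section Precedence

variable {β : Type*} [DecidableEq β]

/-- The number of ways in which the letter `p` occurs before the letter `q` among the first `N`
letters of the word `F`. -/
def precedenceCount (N : ℕ) (F : ℕ → β) (p q : β) : ℕ :=
  #{ab ∈ range N ×ˢ range N | ab.1 < ab.2 ∧ F ab.1 = p ∧ F ab.2 = q}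

theorem precedenceCount_eq_sum (N : ℕ) (F : ℕ → β) (p q : β) :
    precedenceCount N F p q =
      ∑ a ∈ range N, ∑ b ∈ range N, if a < b ∧ F a = p ∧ F b = q then 1 else 0 := by
  rw [precedenceCount, card_filter, sum_product]

theorem precedenceCount_comp_perm {N : ℕ} (F : ℕ → β) {σ : Equiv.Perm ℕ}
    (hσ : {a | σ a ≠ a} ⊆ (range N : Set ℕ)) (p q : β) :
    precedenceCount N (F ∘ σ) p q =
      ∑ a ∈ range N, ∑ b ∈ range N, if σ.symm a < σ.symm b ∧ F a = p ∧ F b = q then 1 else 0 := by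
  rw [precedenceCount_eq_sum]
  symm
  rw [← σ.sum_comp _ _ hσ]
  refine sum_congr rfl fun a _ => ?_
  rw [← σ.sum_comp _ _ hσ]
  simp only [Function.comp_apply, Equiv.symm_apply_apply]

theorem sum_range_sum_range_ite_eq_and {N a b : ℕ} (ha : a < N) (hb : b < N) (P : ℕ → ℕ → Prop)
    [∀ x y, Decidable (P x y)] :
    (∑ x ∈ range N, ∑ y ∈ range N, if x = a ∧ y = b ∧ P x y then 1 else 0) =
      if P a b then 1 else 0 := by
  simp [ite_and, ha, hb]

theorem precedenceCount_comp_swap {N k : ℕ} (hk : k + 1 < N) (F : ℕ → β) (p q : β) :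
    precedenceCount N (F ∘ Equiv.swap k (k + 1)) p q +
        (if F k = p ∧ F (k + 1) = q then 1 else 0) =
      precedenceCount N F p q + if F k = q ∧ F (k + 1) = p then 1 else 0 := by
  have hsupp : {a | Equiv.swap k (k + 1) a ≠ a} ⊆ (range N : Set ℕ) := by
    intro a ha
    have := (Equiv.swap_apply_ne_self_iff.1 ha).2
    simp only [coe_range, Set.mem_Iio]
    omega
  rw [precedenceCount_comp_perm F hsupp, precedenceCount_eq_sum,
    ← sum_range_sum_range_ite_eq_and (by omega) hk fun a b => F a = p ∧ F b = q,
    ← sum_range_sum_range_ite_eq_and hk (by omega) fun a b => F b = q ∧ F a = p]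
  simp only [← sum_add_distrib, Equiv.symm_swap]
  refine sum_congr rfl fun a _ => sum_congr rfl fun b _ => ?_
  by_cases hF : F a = p ∧ F b = q
  · simp only [hF, and_true, Equiv.swap_apply_def]
    split_ifs <;> omega
  · simp only [hF, and_comm (a := F b = q), and_false]

theorem precedenceCount_eq_ite {N a b : ℕ} {F : ℕ → β} {p q : β} (ha : a < N) (hb : b < N)
    (hp : ∀ k, F k = p ↔ k = a) (hq : ∀ k, F k = q ↔ k = b) :
    precedenceCount N F p q = if a < b then 1 else 0 := by
  rw [precedenceCount_eq_sum, ← sum_range_sum_range_ite_eq_and ha hb fun x y => x < y]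
  refine sum_congr rfl fun x _ => sum_congr rfl fun y _ => if_congr ?_ rfl rfl
  rw [hp, hq, and_comm, and_assoc]

end Precedence

section Edges

/-- The label on the vertical edge at row `i`, West of column `j`, with indices in `ℕ`; edges
outside the grid carry no pipe. -/
def vEdge (d : Pipes n) (i j : ℕ) : Option (Fin n) :=
  if h : i < n ∧ j < n + 1 then d.1 ⟨i, h.1⟩ ⟨j, h.2⟩ else none

/-- The label on the horizontal edge North of row `i` in column `j`, with indices in `ℕ`; edges
outside the grid carry no pipe. -/
def hEdge (d : Pipes n) (i j : ℕ) : Option (Fin n) :=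
  if h : i < n + 1 ∧ j < n then d.2 ⟨i, h.1⟩ ⟨j, h.2⟩ else none

variable {w : Equiv.Perm (Fin n)} {d : Pipes n}

theorem vEdge_eq_We (d : Pipes n) (i j : Fin n) : vEdge d i j = We d i j :=
  dif_pos ⟨i.2, by omega⟩

theorem vEdge_succ_eq_Ea (d : Pipes n) (i j : Fin n) : vEdge d i (j + 1) = Ea d i j :=
  dif_pos ⟨i.2, by omega⟩

theorem hEdge_eq_No (d : Pipes n) (i j : Fin n) : hEdge d i j = No d i j :=
  dif_pos ⟨by omega, j.2⟩

theorem hEdge_succ_eq_So (d : Pipes n) (i j : Fin n) : hEdge d (i + 1) j = So d i j :=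
  dif_pos ⟨by omega, j.2⟩

theorem vEdge_eq_none_of_row_le (d : Pipes n) {i : ℕ} (hi : n ≤ i) (j : ℕ) :
    vEdge d i j = none :=
  dif_neg (by omega)

theorem hEdge_eq_none_of_column_le (d : Pipes n) (i : ℕ) {j : ℕ} (hj : n ≤ j) :
    hEdge d i j = none :=
  dif_neg (by omega)

theorem IsGPDof.vEdge_west (hd : IsGPDof w d) {i : ℕ} (hi : i < n) :
    vEdge d i 0 = some ⟨i, hi⟩ :=
  (dif_pos ⟨hi, by omega⟩).trans (hd.2.1 ⟨i, hi⟩)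

theorem IsGPDof.vEdge_east (hd : IsGPDof w d) (i : ℕ) : vEdge d i n = none := by
  unfold vEdge
  split_ifs with h
  · exact hd.2.2.1 ⟨i, h.1⟩
  · rfl

theorem IsGPDof.hEdge_south (hd : IsGPDof w d) {i : ℕ} (hi : n ≤ i) (j : ℕ) :
    hEdge d i j = none := by
  unfold hEdge
  split_ifs with h
  · obtain rfl : i = n := by omega
    exact hd.2.2.2.1 ⟨j, h.2⟩
  · rfl

theorem IsGPDof.hEdge_north (hd : IsGPDof w d) {j : ℕ} (hj : j < n) :
    hEdge d 0 j = some (w.symm ⟨j, hj⟩) :=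
  (dif_pos ⟨by omega, hj⟩).trans (hd.2.2.2.2 ⟨j, hj⟩)

end Edges

section Frontier

/-- The word of labels read from the top left to the bottom right along the boundary of the region
formed by the rows below row `i` and the first `j` squares of row `i`. The final vertical steps
along the East boundary, which meets no pipe, are left out. -/
def frontier (d : Pipes n) (i j k : ℕ) : Option (Fin n) :=
  if k < i then vEdge d k 0
  else if k < i + j then hEdge d i (k - i)
  else if k = i + j then vEdge d i j
  else hEdge d (i + 1) (k - i - 1)

variable {w : Equiv.Perm (Fin n)} {d : Pipes n}

theorem frontier_west (d : Pipes n) (i j : Fin n) : frontier d i j (i + j) = We d i j := by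
  rw [← vEdge_eq_We, frontier, if_neg (by omega), if_neg (by omega), if_pos rfl]

theorem frontier_south (d : Pipes n) (i j : Fin n) : frontier d i j (i + j + 1) = So d i j := by
  rw [← hEdge_succ_eq_So, frontier, if_neg (by omega), if_neg (by omega), if_neg (by omega)]
  congr 1
  omega

theorem frontier_north (d : Pipes n) (i j : Fin n) : frontier d i (j + 1) (i + j) = No d i j := by
  rw [← hEdge_eq_No, frontier, if_neg (by omega), if_pos (by omega), Nat.add_sub_cancel_left]

theorem frontier_east (d : Pipes n) (i j : Fin n) :
    frontier d i (j + 1) (i + j + 1) = Ea d i j := by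
  rw [← vEdge_succ_eq_Ea, frontier, if_neg (by omega), if_neg (by omega), if_pos (by omega)]

theorem frontier_succ_of_ne (d : Pipes n) {i j k : ℕ} (h₁ : k ≠ i + j) (h₂ : k ≠ i + j + 1) :
    frontier d i (j + 1) k = frontier d i j k := by
  unfold frontier
  split_ifs <;> first | rfl | omega

theorem frontier_succ_of_swap {i j : Fin n} (hE : Ea d i j = We d i j) (hN : No d i j = So d i j) :
    frontier d i (j + 1) = frontier d i j ∘ Equiv.swap (i + j : ℕ) (i + j + 1) := by
  funext k
  rw [Function.comp_apply]
  by_cases h₁ : k = i + j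
  · rw [h₁, Equiv.swap_apply_left, frontier_north, frontier_south, hN]
  by_cases h₂ : k = i + j + 1
  · rw [h₂, Equiv.swap_apply_right, frontier_east, frontier_west, hE]
  rw [Equiv.swap_apply_of_ne_of_ne h₁ h₂, frontier_succ_of_ne d h₁ h₂]

theorem frontier_succ_of_turn {i j : Fin n} (hE : Ea d i j = So d i j) (hN : No d i j = We d i j) :
    frontier d i (j + 1) = frontier d i j := by
  funext k
  by_cases h₁ : k = i + j
  · rw [h₁, frontier_north, frontier_west, hN]
  by_cases h₂ : k = i + j + 1
  · rw [h₂, frontier_east, frontier_south, hE]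
  exact frontier_succ_of_ne d h₁ h₂

theorem IsGPDof.frontier_row_end (hd : IsGPDof w d) (i : ℕ) :
    frontier d (i + 1) n = frontier d i 0 := by
  funext k
  unfold frontier
  rcases lt_trichotomy k i with hk | rfl | hk
  · rw [if_pos (by omega), if_pos hk]
  · rw [if_pos (by omega), if_neg (by omega), if_neg (by omega), if_pos (by omega)]
  · rw [if_neg (show ¬k < i + 1 by omega), if_neg (show ¬k < i by omega),
      if_neg (show ¬k < i + 0 by omega), if_neg (show k ≠ i + 0 by omega)]
    split_ifs
    · congr 1
    · rw [hd.vEdge_east, hEdge_eq_none_of_column_le d _ (by omega)]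
    · rw [hEdge_eq_none_of_column_le d _ (by omega), hEdge_eq_none_of_column_le d _ (by omega)]

theorem IsGPDof.frontier_start_eq_some_iff (hd : IsGPDof w d) (k : ℕ) (p : Fin n) :
    frontier d n n k = some p ↔ k = p := by
  unfold frontier
  by_cases hk : k < n
  · rw [if_pos hk, hd.vEdge_west hk, Option.some_inj, Fin.ext_iff]
  · rw [if_neg hk, hd.hEdge_south le_rfl, vEdge_eq_none_of_row_le d le_rfl,
      hd.hEdge_south n.le_succ]
    simp only [ite_self, reduceCtorEq, false_iff]
    omega

theorem IsGPDof.frontier_end_eq_some_iff (hd : IsGPDof w d) (k : ℕ) (p : Fin n) :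
    frontier d 0 n k = some p ↔ k = w p := by
  unfold frontier
  rw [if_neg k.not_lt_zero, zero_add, Nat.sub_zero]
  by_cases hk : k < n
  · rw [if_pos hk, hd.hEdge_north hk, Option.some_inj, Equiv.symm_apply_eq, Fin.ext_iff]
  · have hnone : (if k = n then vEdge d 0 n else hEdge d (0 + 1) (k - 1)) = none := by
      split_ifs
      · exact hd.vEdge_east 0
      · exact hEdge_eq_none_of_column_le d _ (by omega)
    rw [if_neg hk, hnone]
    simp only [reduceCtorEq, false_iff]
    omega

end Frontier

section Crossings

variable {w : Equiv.Perm (Fin n)} {d : Pipes n}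

theorem tile_eq_cross_iff (d : Pipes n) (i j : Fin n) :
    tile d i j = .cross ↔ (So d i j).isSome ∧ ∃ a, We d i j = some a ∧ Ea d i j = some a := by
  unfold tile
  rcases We d i j with _ | a <;> rcases So d i j with _ | b <;> grind

theorem IsValid.We_ne_So_of_We_eq_some (hv : IsValid d) {i j p : Fin n}
    (hW : We d i j = some p) : We d i j ≠ So d i j := by
  intro h
  rw [(hv i j).2 h] at hW
  cases hW

theorem crossesAt_iff_of_swap {i j : Fin n} (hE : Ea d i j = We d i j) (p q : Fin n) :
    CrossesAt d p q i j ↔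
      We d i j = some p ∧ So d i j = some q ∨ We d i j = some q ∧ So d i j = some p := by
  refine ⟨And.right, fun h => ⟨(tile_eq_cross_iff d i j).2 ?_, h⟩⟩
  rcases h with ⟨hW, hS⟩ | ⟨hW, hS⟩ <;> simp [hE, hW, hS]

theorem IsValid.not_crossesAt_of_turn (hv : IsValid d) {i j : Fin n} (hE : Ea d i j = So d i j)
    (p q : Fin n) : ¬CrossesAt d p q i j := by
  rintro ⟨hcross, -⟩
  obtain ⟨-, a, hW, hEa⟩ := (tile_eq_cross_iff d i j).1 hcross
  exact hv.We_ne_So_of_We_eq_some hW (by rw [hW, ← hE, hEa])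

theorem IsValid.ne_of_crossesAt (hv : IsValid d) {p q i j : Fin n} (h : CrossesAt d p q i j) :
    p ≠ q := by
  rintro rfl
  obtain ⟨hW, hS⟩ := or_self_iff.1 h.2
  exact hv.We_ne_So_of_We_eq_some hW (hW.trans hS.symm)

theorem crossesAt_comm (d : Pipes n) (p q i j : Fin n) :
    CrossesAt d p q i j ↔ CrossesAt d q p i j := by
  rw [CrossesAt, CrossesAt, or_comm]

theorem crossCount_comm (d : Pipes n) (p q : Fin n) : crossCount d p q = crossCount d q p := by
  simp only [crossCount, crossesAt_comm d p q]

theorem IsValid.crossCount_self (hv : IsValid d) (p : Fin n) : crossCount d p p = 0 :=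
  card_eq_zero.2 (filter_eq_empty_iff.2 fun _ _ h => hv.ne_of_crossesAt h rfl)

theorem IsValid.noDoubleCross_iff (hv : IsValid d) :
    NoDoubleCross d ↔ ∀ p q, p < q → crossCount d p q ≤ 1 := by
  refine ⟨fun h p q _ => h p q, fun h p q => ?_⟩
  rcases lt_trichotomy p q with hpq | rfl | hpq
  · exact h p q hpq
  · exact (hv.crossCount_self p).trans_le zero_le_one
  · exact (crossCount_comm d p q).trans_le (h q p hpq)

theorem IsValid.existsUnique_crossesAt (hv : IsValid d) {i j : Fin n} (h : tile d i j = .cross) :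
    ∃! pq : Fin n × Fin n, pq.1 < pq.2 ∧ CrossesAt d pq.1 pq.2 i j := by
  obtain ⟨hS, a, hW, -⟩ := (tile_eq_cross_iff d i j).1 h
  obtain ⟨b, hS⟩ := Option.isSome_iff_exists.1 hS
  have hab : CrossesAt d a b i j := ⟨h, .inl ⟨hW, hS⟩⟩
  have hlabels (p q : Fin n) (hpq : CrossesAt d p q i j) : a = p ∧ b = q ∨ a = q ∧ b = p := by
    simpa only [hW, hS, Option.some_inj] using hpq.2
  rcases lt_or_gt_of_ne (hv.ne_of_crossesAt hab) with hlt | hlt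
  · refine ⟨(a, b), ⟨hlt, hab⟩, ?_⟩
    rintro ⟨p, q⟩ ⟨hpq, hc⟩
    rcases hlabels p q hc with ⟨rfl, rfl⟩ | ⟨rfl, rfl⟩
    · rfl
    · exact absurd hlt hpq.asymm
  · refine ⟨(b, a), ⟨hlt, (crossesAt_comm d a b i j).1 hab⟩, ?_⟩
    rintro ⟨p, q⟩ ⟨hpq, hc⟩
    rcases hlabels p q hc with ⟨rfl, rfl⟩ | ⟨rfl, rfl⟩
    · exact absurd hlt hpq.asymm
    · rfl

theorem IsValid.tileCount_cross_eq_sum (hv : IsValid d) :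
    tileCount d .cross = ∑ pq : Fin n × Fin n with pq.1 < pq.2, crossCount d pq.1 pq.2 := by
  have hcard (ij : Fin n × Fin n) :
      (if tile d ij.1 ij.2 = .cross then 1 else 0) =
        #{pq : Fin n × Fin n | pq.1 < pq.2 ∧ CrossesAt d pq.1 pq.2 ij.1 ij.2} := by
    split_ifs with h
    · exact (card_eq_one_iff_existsUnique.2 (by simpa using hv.existsUnique_crossesAt h)).symm
    · exact (card_eq_zero.2 (filter_eq_empty_iff.2 fun _ _ hpq => h hpq.2.1)).symm
  rw [tileCount, card_filter, sum_congr rfl fun ij _ => hcard ij]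
  simp only [← filter_filter]
  exact sum_card_bipartiteAbove_eq_sum_card_bipartiteBelow
    fun ij pq : Fin n × Fin n => CrossesAt d pq.1 pq.2 ij.1 ij.2

end Crossings

section Sweep

/-- The number of occurrences of pipe `p` before pipe `q` on the frontier of the swept region. -/
noncomputable def frontierPrecedence (d : Pipes n) (p q : Fin n) (i j : ℕ) : ℕ :=
  precedenceCount (2 * n) (frontier d i j) (some p) (some q)

variable {w : Equiv.Perm (Fin n)} {d : Pipes n}

theorem IsValid.frontierPrecedence_succ (hv : IsValid d) (p q i j : Fin n) :
    (frontierPrecedence d p q i (j + 1) : ZMod 2) =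
      frontierPrecedence d p q i j + if CrossesAt d p q i j then 1 else 0 := by
  have htwo : (2 : ZMod 2) = 0 := rfl
  unfold frontierPrecedence
  rcases (hv i j).1 with h | h <;> obtain ⟨hE, hN⟩ := Prod.mk.inj h
  · have hswap := congrArg (Nat.cast : ℕ → ZMod 2) <|
      precedenceCount_comp_swap (N := 2 * n) (k := i + j) (by omega) (frontier d i j)
        (some p) (some q)
    rw [← frontier_succ_of_swap hE hN, frontier_west, frontier_south] at hswap
    simp only [Nat.cast_add, Nat.cast_ite, Nat.cast_one, Nat.cast_zero] at hswap
    rw [crossesAt_iff_of_swap hE]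
    by_cases hpq : We d i j = some p ∧ So d i j = some q
    · have hqp : ¬(We d i j = some q ∧ So d i j = some p) := fun hqp =>
        hv.We_ne_So_of_We_eq_some hpq.1 (hpq.1.trans hqp.2.symm)
      rw [if_pos hpq, if_neg hqp] at hswap
      rw [if_pos (.inl hpq)]
      linear_combination hswap - htwo
    · rw [if_neg hpq, add_zero] at hswap
      simpa only [hpq, false_or] using hswap
  · rw [if_neg (hv.not_crossesAt_of_turn hE p q), add_zero,
      frontier_succ_of_turn hE hN]

theorem IsGPDof.crossCount_cast_zmod_two (hd : IsGPDof w d) (p q : Fin n) :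
    (crossCount d p q : ZMod 2) =
      frontierPrecedence d p q 0 n - frontierPrecedence d p q n n := by
  calc (crossCount d p q : ZMod 2)
      = ∑ i : Fin n, ∑ j : Fin n, if CrossesAt d p q i j then 1 else 0 := by
        rw [crossCount, natCast_card_filter, Fintype.sum_prod_type]
    _ = ∑ i : Fin n, ∑ j : Fin n, ((frontierPrecedence d p q i (j + 1) : ZMod 2) -
          frontierPrecedence d p q i j) := by
        simp only [hd.1.frontierPrecedence_succ, add_sub_cancel_left]
    _ = ∑ i : Fin n, ((frontierPrecedence d p q i n : ZMod 2) -
          frontierPrecedence d p q (i + 1) n) := by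
        refine sum_congr rfl fun i _ => ?_
        rw [Fin.sum_univ_eq_sum_range fun j : ℕ => (frontierPrecedence d p q i (j + 1) : ZMod 2) -
          frontierPrecedence d p q i j,
          sum_range_sub fun j => (frontierPrecedence d p q i j : ZMod 2)]
        simp only [frontierPrecedence, hd.frontier_row_end]
    _ = frontierPrecedence d p q 0 n - frontierPrecedence d p q n n := by
        rw [Fin.sum_univ_eq_sum_range fun i : ℕ => (frontierPrecedence d p q i n : ZMod 2) -
          frontierPrecedence d p q (i + 1) n,
          sum_range_sub' fun i => (frontierPrecedence d p q i n : ZMod 2)]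

theorem IsGPDof.frontierPrecedence_start (hd : IsGPDof w d) (p q : Fin n) :
    frontierPrecedence d p q n n = if p < q then 1 else 0 :=
  precedenceCount_eq_ite (by omega) (by omega) (hd.frontier_start_eq_some_iff · p)
    (hd.frontier_start_eq_some_iff · q)

theorem IsGPDof.frontierPrecedence_end (hd : IsGPDof w d) (p q : Fin n) :
    frontierPrecedence d p q 0 n = if w p < w q then 1 else 0 :=
  precedenceCount_eq_ite (by omega) (by omega) (hd.frontier_end_eq_some_iff · p)
    (hd.frontier_end_eq_some_iff · q)

theorem IsGPDof.odd_crossCount_iff (hd : IsGPDof w d) {p q : Fin n} (hpq : p < q) :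
    Odd (crossCount d p q) ↔ w q < w p := by
  rw [← ZMod.natCast_eq_one_iff_odd, hd.crossCount_cast_zmod_two, hd.frontierPrecedence_start,
    hd.frontierPrecedence_end, if_pos hpq]
  have hne : w p ≠ w q := w.injective.ne hpq.ne
  split_ifs with h
  · simp [h.asymm]
  · simpa using lt_of_le_of_ne (not_lt.1 h) hne.symm

end Sweep

section Length

variable {w : Equiv.Perm (Fin n)} {d : Pipes n}

theorem IsGPDof.invCount_eq_sum (hd : IsGPDof w d) :
    invCount w = ∑ pq : Fin n × Fin n with pq.1 < pq.2, crossCount d pq.1 pq.2 % 2 := by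
  rw [invCount, ← filter_filter, card_filter]
  refine sum_congr rfl fun pq hpq => ?_
  simp only [← hd.odd_crossCount_iff (mem_filter.1 hpq).2, Nat.odd_iff]
  split_ifs <;> omega

theorem IsGPDof.invCount_le_tileCount_cross (hd : IsGPDof w d) :
    invCount w ≤ tileCount d .cross := by
  rw [hd.invCount_eq_sum, hd.1.tileCount_cross_eq_sum]
  exact sum_le_sum fun _ _ => Nat.mod_le _ _

theorem IsGPDof.invCount_eq_tileCount_cross_iff (hd : IsGPDof w d) :
    invCount w = tileCount d .cross ↔ NoDoubleCross d := by
  rw [hd.invCount_eq_sum, hd.1.tileCount_cross_eq_sum, hd.1.noDoubleCross_iff,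
    sum_eq_sum_iff_of_le fun _ _ => Nat.mod_le _ _]
  simp only [mem_filter, mem_univ, true_and, Prod.forall, Nat.mod_eq_iff_lt two_ne_zero,
    Nat.lt_succ_iff]

end Length

section Shape

variable {w : Equiv.Perm (Fin n)} {d : Pipes n}

theorem tile_of_isSome_We_of_isSome_So {i j : Fin n} (hW : (We d i j).isSome)
    (hS : (So d i j).isSome) : tile d i j = .cross ∨ tile d i j = .bump := by
  obtain ⟨a, hW⟩ := Option.isSome_iff_exists.1 hW
  obtain ⟨b, hS⟩ := Option.isSome_iff_exists.1 hS
  simp only [tile, hW, hS]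
  split_ifs <;> simp

theorem tile_of_isSome_We_of_not_isSome_So {i j : Fin n} (hW : (We d i j).isSome)
    (hS : ¬(So d i j).isSome) : tile d i j = .horiz ∨ tile d i j = .nw := by
  obtain ⟨a, hW⟩ := Option.isSome_iff_exists.1 hW
  simp only [tile, hW, Option.not_isSome_iff_eq_none.1 hS]
  split_ifs <;> simp

theorem tile_of_not_isSome_We_of_not_isSome_So {i j : Fin n} (hW : ¬(We d i j).isSome)
    (hS : ¬(So d i j).isSome) : tile d i j = .blank := by
  simp only [tile, Option.not_isSome_iff_eq_none.1 hW, Option.not_isSome_iff_eq_none.1 hS]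

theorem IsValid.isSome_Ea_No_of_ne_horiz_of_ne_vert (hv : IsValid d) {i j : Fin n}
    (hh : tile d i j ≠ .horiz) (hvert : tile d i j ≠ .vert) :
    (Ea d i j).isSome = (So d i j).isSome ∧ (No d i j).isSome = (We d i j).isSome := by
  rcases (hv i j).1 with h | h <;> obtain ⟨hE, hN⟩ := Prod.mk.inj h
  · rw [hE, hN]
    unfold tile at hh hvert
    rcases hW : We d i j <;> rcases hS : So d i j <;> simp_all
  · rw [hE, hN]
    exact ⟨rfl, rfl⟩

theorem IsGPDof.isSome_hEdge_eq_isSome_vEdge (hd : IsGPDof w d)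
    (hturn : ∀ i j, tile d i j ≠ .horiz ∧ tile d i j ≠ .vert) (i : ℕ) {j : ℕ} (hj : j < n) :
    (hEdge d i j).isSome = (vEdge d i j).isSome := by
  by_cases hi : i < n
  · have h := hturn ⟨i, hi⟩ ⟨j, hj⟩
    have := (hd.1.isSome_Ea_No_of_ne_horiz_of_ne_vert h.1 h.2).2
    rwa [← hEdge_eq_No, ← vEdge_eq_We] at this
  · rw [hd.hEdge_south (not_lt.1 hi), vEdge_eq_none_of_row_le d (not_lt.1 hi)]

theorem IsGPDof.isSome_vEdge_succ (hd : IsGPDof w d)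
    (hturn : ∀ i j, tile d i j ≠ .horiz ∧ tile d i j ≠ .vert) (i : ℕ) {j : ℕ} (hj : j < n) :
    (vEdge d i (j + 1)).isSome = (vEdge d (i + 1) j).isSome := by
  by_cases hi : i < n
  · have h := hturn ⟨i, hi⟩ ⟨j, hj⟩
    have := (hd.1.isSome_Ea_No_of_ne_horiz_of_ne_vert h.1 h.2).1
    rwa [← vEdge_succ_eq_Ea, ← hEdge_succ_eq_So, hd.isSome_hEdge_eq_isSome_vEdge hturn _ hj]
      at this
  · rw [vEdge_eq_none_of_row_le d (not_lt.1 hi), vEdge_eq_none_of_row_le d (by omega)]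

theorem IsGPDof.isSome_vEdge_iff (hd : IsGPDof w d)
    (hturn : ∀ i j, tile d i j ≠ .horiz ∧ tile d i j ≠ .vert) {j : ℕ} (hj : j ≤ n) (i : ℕ) :
    (vEdge d i j).isSome ↔ i + j < n := by
  induction j generalizing i with
  | zero =>
    by_cases hi : i < n
    · simp [hd.vEdge_west hi, hi]
    · simp [vEdge_eq_none_of_row_le d (not_lt.1 hi), hi]
  | succ j ih => rw [hd.isSome_vEdge_succ hturn i hj, ih (by omega), Nat.succ_add_eq_add_succ]

theorem IsGPDof.isSome_We_iff (hd : IsGPDof w d)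
    (hturn : ∀ i j, tile d i j ≠ .horiz ∧ tile d i j ≠ .vert) (i j : Fin n) :
    (We d i j).isSome ↔ (i + j : ℕ) < n := by
  rw [← vEdge_eq_We, hd.isSome_vEdge_iff hturn j.2.le]

theorem IsGPDof.isSome_So_iff (hd : IsGPDof w d)
    (hturn : ∀ i j, tile d i j ≠ .horiz ∧ tile d i j ≠ .vert) (i j : Fin n) :
    (So d i j).isSome ↔ (i + j + 1 : ℕ) < n := by
  rw [← hEdge_succ_eq_So, hd.isSome_hEdge_eq_isSome_vEdge hturn _ j.2,
    hd.isSome_vEdge_iff hturn j.2.le, add_right_comm]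

theorem IsClassic.ne_horiz_and_ne_vert (hc : IsClassic d) (i j : Fin n) :
    tile d i j ≠ .horiz ∧ tile d i j ≠ .vert := by
  obtain ⟨habove, hdiag, hbelow, -⟩ := hc
  rcases lt_trichotomy (i + j + 2 : ℕ) (n + 1) with h | h | h
  · rcases habove i j (by omega) with h | h <;> simp [h]
  · simp [hdiag i j h]
  · simp [hbelow i j h]

theorem IsGPDof.isClassic_iff (hd : IsGPDof w d) :
    IsClassic d ↔
      (∀ i j, tile d i j ≠ .horiz ∧ tile d i j ≠ .vert) ∧ NoDoubleCross d := by
  refine ⟨fun hc => ⟨hc.ne_horiz_and_ne_vert, hc.2.2.2⟩, fun ⟨hturn, hcross⟩ => ?_⟩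
  have hW := hd.isSome_We_iff hturn
  have hS := hd.isSome_So_iff hturn
  refine ⟨fun i j h => ?_, fun i j h => ?_, fun i j h => ?_, hcross⟩
  · exact tile_of_isSome_We_of_isSome_So ((hW i j).2 (by omega)) ((hS i j).2 (by omega))
  · exact (tile_of_isSome_We_of_not_isSome_So ((hW i j).2 (by omega))
      (mt (hS i j).1 (by omega))).resolve_left (hturn i j).1
  · exact tile_of_not_isSome_We_of_not_isSome_So (mt (hW i j).1 (by omega))
      (mt (hS i j).1 (by omega))

theorem tileCount_eq_zero_iff (d : Pipes n) (t : Tile) :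
    tileCount d t = 0 ↔ ∀ i j, tile d i j ≠ t := by
  simp [tileCount, filter_eq_empty_iff]

end Shape

section Degree

open MvPolynomial

/-- The factor that a tile of type `t` at position `(i,j)` contributes to the weight. -/
noncomputable def tileWeight (t : Tile) (i j : Fin n) : MvPolynomial (Var n) ℤ :=
  match t with
  | .cross | .horiz | .vert => X Var.A + X (Var.x i) - X (Var.y j)
  | .blank => X Var.B - X (Var.x i) + X (Var.y j)
  | _ => X Var.A + X Var.B

theorem wt_eq_prod_tileWeight (d : Pipes n) :
    wt d = ∏ i : Fin n, ∏ j : Fin n, tileWeight (tile d i j) i j :=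
  rfl

theorem tileWeight_ne_zero (t : Tile) (i j : Fin n) : tileWeight t i j ≠ 0 := by
  intro h
  have heval := congrArg (eval fun v : Var n => match v with
    | .x _ => (0 : ℤ) | .y _ => 0 | .A => 1 | .B => 1) h
  cases t <;> simp [tileWeight] at heval

theorem degreeOf_X_add_of_degreeOf_eq_zero {σ R : Type*} [CommSemiring R] [Nontrivial R] {s : σ}
    {f : MvPolynomial σ R} (hf : degreeOf s f = 0) : degreeOf s (X s + f) = 1 := by
  rw [degreeOf_add_eq_of_degreeOf_lt] <;> simp [hf]

theorem degreeOf_sub_eq_zero {σ R : Type*} [CommRing R] {s : σ} {f g : MvPolynomial σ R}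
    (hf : degreeOf s f = 0) (hg : degreeOf s g = 0) : degreeOf s (f - g) = 0 := by
  simpa [hf, hg] using degreeOf_sub_le s f g

theorem degreeOf_tileWeight (t : Tile) (i j : Fin n) :
    degreeOf Var.B (tileWeight t i j) =
      if t = .cross ∨ t = .horiz ∨ t = .vert then 0 else 1 := by
  have hx : degreeOf Var.B (X (Var.x i) : MvPolynomial (Var n) ℤ) = 0 := by simp [degreeOf_X]
  have hy : degreeOf Var.B (X (Var.y j) : MvPolynomial (Var n) ℤ) = 0 := by simp [degreeOf_X]
  have hA : degreeOf Var.B (X Var.A : MvPolynomial (Var n) ℤ) = 0 := by simp [degreeOf_X]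
  have hstraight : degreeOf Var.B (X Var.A + X (Var.x i) - X (Var.y j) : MvPolynomial (Var n) ℤ) =
      0 := by
    refine degreeOf_sub_eq_zero ?_ hy
    simpa [hA, hx] using degreeOf_add_le Var.B (X Var.A) (X (Var.x i) : MvPolynomial (Var n) ℤ)
  have hblank : degreeOf Var.B (X Var.B - X (Var.x i) + X (Var.y j) : MvPolynomial (Var n) ℤ) =
      1 := by
    rw [sub_add, sub_eq_add_neg, neg_sub]
    exact degreeOf_X_add_of_degreeOf_eq_zero (degreeOf_sub_eq_zero hy hx)
  have hturn : degreeOf Var.B (X Var.A + X Var.B : MvPolynomial (Var n) ℤ) = 1 := by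
    rw [add_comm]
    exact degreeOf_X_add_of_degreeOf_eq_zero hA
  cases t <;> simp [tileWeight, hstraight, hblank, hturn]

theorem tileCount_eq_sum (d : Pipes n) (t : Tile) :
    tileCount d t = ∑ i : Fin n, ∑ j : Fin n, if tile d i j = t then 1 else 0 := by
  rw [tileCount, card_filter, Fintype.sum_prod_type]

theorem degreeOf_wt_eq_sum (d : Pipes n) :
    degreeOf Var.B (wt d) =
      ∑ i : Fin n, ∑ j : Fin n, degreeOf Var.B (tileWeight (tile d i j) i j) := by
  rw [wt_eq_prod_tileWeight, degreeOf_prod_eq _ _ fun i _ =>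
    prod_ne_zero_iff.2 fun j _ => tileWeight_ne_zero (tile d i j) i j]
  exact sum_congr rfl fun i _ => degreeOf_prod_eq _ _ fun j _ => tileWeight_ne_zero _ i j

theorem degreeOf_wt_add_tileCount (d : Pipes n) :
    degreeOf Var.B (wt d) + (tileCount d .cross + tileCount d .horiz + tileCount d .vert) =
      n ^ 2 := by
  have hone (i j : Fin n) : degreeOf Var.B (tileWeight (tile d i j) i j) +
      ((if tile d i j = .cross then 1 else 0) + (if tile d i j = .horiz then 1 else 0) +
        (if tile d i j = .vert then 1 else 0)) = 1 := by
    rw [degreeOf_tileWeight]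
    cases tile d i j <;> simp
  rw [degreeOf_wt_eq_sum, tileCount_eq_sum, tileCount_eq_sum, tileCount_eq_sum]
  simp only [← sum_add_distrib, hone]
  simp [sq]

end Degree

theorem statement0 {n : ℕ} (hn : 1 ≤ n) (w : Equiv.Perm (Fin n)) (d : Pipes n)
    (hd : IsGPDof w d) :
    MvPolynomial.degreeOf Var.B (wt d) +
        (tileCount d .cross + tileCount d .horiz + tileCount d .vert) = n ^ 2 ∧
    MvPolynomial.degreeOf Var.B (wt d) + invCount w ≤ n ^ 2 ∧
    (MvPolynomial.degreeOf Var.B (wt d) + invCount w = n ^ 2 ↔ IsClassic d) := by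
  have hdeg := degreeOf_wt_add_tileCount d
  have hle := hd.invCount_le_tileCount_cross
  refine ⟨hdeg, by omega, ?_⟩
  calc MvPolynomial.degreeOf Var.B (wt d) + invCount w = n ^ 2
      ↔ (tileCount d .horiz = 0 ∧ tileCount d .vert = 0) ∧
          invCount w = tileCount d .cross := by omega
    _ ↔ (∀ i j, tile d i j ≠ .horiz ∧ tile d i j ≠ .vert) ∧ NoDoubleCross d := by
        simp only [tileCount_eq_zero_iff, forall_and, hd.invCount_eq_tileCount_cross_iff]
    _ ↔ IsClassic d := hd.isClassic_iff.symm

end GPDpaper
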